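/- arXiv:2402.09887 — 2 statements merged into one kernel-verified Lean document; each statement's English description precedes it below -/
import Mathlib

section
/- Define elements P^{(n)} ∈ TL^A_n recursively by P^{(1)} = 1 and P^{(n+1)} = P^{(n)} + ([n]/[n+1])·P^{(n)} e_n P^{(n)}, where P^{(n)} is viewed in TL^A_{n+1} via the natural inclusion. Then for every n ≥ 1 the element P^{(n)} satisfies P^{(n)} ≠ 0, P^{(n)}·P^{(n)} = P^{(n)}, and e_i·P^{(n)} = P^{(n)}·e_i = 0 for all 1 ≤ i ≤ n−1; hence P^{(n)} is the Jones–Wenzl projection. -/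
noncomputable section
open scoped Classical

/-! ### The field `ℂ(q)` and quantum integers -/

/-- The field `ℂ(q)` of rational functions in one variable `q`. -/
abbrev 𝕂 : Type := RatFunc ℂ

/-- The variable `q`. -/
def qA : 𝕂 := RatFunc.X

/-- The quantum integer `[n] = (q^n - q^{-n})/(q - q^{-1})`. -/
def qInt (n : ℤ) : 𝕂 := (qA ^ n - qA⁻¹ ^ n) / (qA - qA⁻¹)

/-! ### The Temperley–Lieb algebra of type A and the Jones–Wenzl projections -/

/-- Defining relations of the Temperley–Lieb algebra `TL^A_{m+1}`.
The generator indexed by `i : Fin m` represents `e_{i+1}` (so the generators are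
`e_1, …, e_m`): `e_i² = -[2] e_i`, `e_i e_j e_i = e_i` for `|i-j| = 1`, and
`e_i e_j = e_j e_i` for `|i-j| > 1`. -/
inductive TLArel (m : ℕ) : FreeAlgebra 𝕂 (Fin m) → FreeAlgebra 𝕂 (Fin m) → Prop
  | sq (i : Fin m) :
      TLArel m (FreeAlgebra.ι 𝕂 i * FreeAlgebra.ι 𝕂 i) ((-(qA + qA⁻¹)) • FreeAlgebra.ι 𝕂 i)
  | braid (i j : Fin m) (h : (j : ℕ) = i + 1 ∨ (i : ℕ) = j + 1) :
      TLArel m (FreeAlgebra.ι 𝕂 i * FreeAlgebra.ι 𝕂 j * FreeAlgebra.ι 𝕂 i) (FreeAlgebra.ι 𝕂 i)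
  | comm (i j : Fin m) (h : (i : ℕ) + 1 < j ∨ (j : ℕ) + 1 < i) :
      TLArel m (FreeAlgebra.ι 𝕂 i * FreeAlgebra.ι 𝕂 j) (FreeAlgebra.ι 𝕂 j * FreeAlgebra.ι 𝕂 i)

/-- The Temperley–Lieb algebra of type A with `m` generators `e_1, …, e_m`,
i.e. the algebra `TL^A_{m+1}` on `m+1` strands. -/
abbrev TLA (m : ℕ) : Type := RingQuot (TLArel m)

/-- The generator `e_{i+1}` of `TL^A_{m+1}`. -/
def EA {m : ℕ} (i : Fin m) : TLA m := RingQuot.mkAlgHom 𝕂 (TLArel m) (FreeAlgebra.ι 𝕂 i)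

/-- The natural inclusion `TL^A_{m+1} → TL^A_{m+2}`, sending `e_i` to `e_i`. -/
def TLAincl (m : ℕ) : TLA m →ₐ[𝕂] TLA (m + 1) :=
  RingQuot.liftAlgHom 𝕂
    ⟨FreeAlgebra.lift 𝕂 (fun i => EA i.castSucc), by
      intro x y h
      induction h with
      | sq i =>
          have h2 := RingQuot.mkAlgHom_rel 𝕂 (TLArel.sq i.castSucc)
          simp only [map_mul, map_smul, FreeAlgebra.lift_ι_apply, EA] at h2 ⊢
          exact h2
      | braid i j h =>
          have h2 := RingQuot.mkAlgHom_rel 𝕂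
            (TLArel.braid i.castSucc j.castSucc (by simpa using h))
          simp only [map_mul, FreeAlgebra.lift_ι_apply, EA] at h2 ⊢
          exact h2
      | comm i j h =>
          have h2 := RingQuot.mkAlgHom_rel 𝕂
            (TLArel.comm i.castSucc j.castSucc (by simpa using h))
          simp only [map_mul, FreeAlgebra.lift_ι_apply, EA] at h2 ⊢
          exact h2⟩

/-- The Jones–Wenzl projection `P^{(m+1)} ∈ TL^A_{m+1}`, defined via Wenzl's recurrence
`P^{(1)} = 1` and `P^{(n+1)} = P^{(n)} + ([n]/[n+1]) P^{(n)} e_n P^{(n)}`.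
Thus `JW m` is the projection `P^{(m+1)}` and `P^{(n)} = JW (n-1)`. -/
def JW : (m : ℕ) → TLA m
  | 0 => 1
  | m + 1 =>
      TLAincl m (JW m) +
        (qInt (m + 1) / qInt (m + 2)) •
          (TLAincl m (JW m) * EA (Fin.last m) * TLAincl m (JW m))

theorem EA_sq {m : ℕ} (i : Fin m) : EA i * EA i = (-(qA + qA⁻¹)) • EA i := by
  have h2 := RingQuot.mkAlgHom_rel 𝕂 (TLArel.sq i)
  simp only [map_mul, map_smul] at h2
  exact h2

theorem EA_braid {m : ℕ} (i j : Fin m) (h : (j : ℕ) = i + 1 ∨ (i : ℕ) = j + 1) :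
    EA i * EA j * EA i = EA i := by
  have h2 := RingQuot.mkAlgHom_rel 𝕂 (TLArel.braid i j h)
  simp only [map_mul] at h2
  exact h2

theorem EA_comm {m : ℕ} (i j : Fin m) (h : (i : ℕ) + 1 < j ∨ (j : ℕ) + 1 < i) :
    EA i * EA j = EA j * EA i := by
  have h2 := RingQuot.mkAlgHom_rel 𝕂 (TLArel.comm i j h)
  simp only [map_mul] at h2
  exact h2

theorem incl_EA {m : ℕ} (i : Fin m) : TLAincl m (EA i) = EA i.castSucc := by
  rw [TLAincl, EA, RingQuot.liftAlgHom_mkAlgHom_apply, FreeAlgebra.lift_ι_apply]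

theorem incl_incl_comm {m : ℕ} (x : TLA m) :
    TLAincl (m + 1) (TLAincl m x) * EA (Fin.last (m + 1)) =
      EA (Fin.last (m + 1)) * TLAincl (m + 1) (TLAincl m x) := by
  obtain ⟨y, rfl⟩ := RingQuot.mkAlgHom_surjective 𝕂 (TLArel m) x
  induction y using FreeAlgebra.induction with
  | grade0 r => simp only [AlgHom.commutes]; exact Algebra.commutes r _
  | grade1 i =>
    have h := incl_EA i
    rw [EA] at h
    rw [h, incl_EA]
    apply EA_comm
    left
    simp
  | mul a b ha hb =>
    simp only [map_mul]
    rw [mul_assoc, hb, ← mul_assoc, ha, mul_assoc]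
  | add a b ha hb =>
    simp only [map_add, add_mul, mul_add, ha, hb]

/-- The augmentation sending all generators to zero. -/
def TLaug (m : ℕ) : TLA m →ₐ[𝕂] 𝕂 :=
  RingQuot.liftAlgHom 𝕂
    ⟨FreeAlgebra.lift 𝕂 (fun _ => (0 : 𝕂)), by
      intro x y h
      induction h with
      | sq i => simp
      | braid i j h => simp
      | comm i j h => simp⟩

theorem TLaug_EA {m : ℕ} (i : Fin m) : TLaug m (EA i) = 0 := by
  rw [TLaug, EA, RingQuot.liftAlgHom_mkAlgHom_apply, FreeAlgebra.lift_ι_apply]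

theorem TLaug_incl {m : ℕ} (x : TLA m) : TLaug (m + 1) (TLAincl m x) = TLaug m x := by
  obtain ⟨y, rfl⟩ := RingQuot.mkAlgHom_surjective 𝕂 (TLArel m) x
  induction y using FreeAlgebra.induction with
  | grade0 r => simp only [AlgHom.commutes]
  | grade1 i =>
    have h := incl_EA i
    have h' := TLaug_EA i
    rw [EA] at h h'
    rw [h, h', TLaug_EA]
  | mul a b ha hb => simp only [map_mul, ha, hb]
  | add a b ha hb => simp only [map_add, ha, hb]

theorem TLaug_JW (m : ℕ) : TLaug m (JW m) = 1 := by
  induction m with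
  | zero => simp [JW]
  | succ m ih => simp [JW, TLaug_incl, TLaug_EA, ih]

theorem qA_ne : qA ≠ 0 := RatFunc.X_ne_zero

theorem qA_pow_ne (n : ℕ) (hn : n ≠ 0) : qA ^ n ≠ 1 := by
  intro h
  have h1 : algebraMap (Polynomial ℂ) 𝕂 (Polynomial.X ^ n) = algebraMap (Polynomial ℂ) 𝕂 1 := by
    rw [map_pow, map_one, RatFunc.algebraMap_X]; exact h
  have h2 := RatFunc.algebraMap_injective ℂ h1
  have h3 := congrArg Polynomial.natDegree h2
  simp at h3
  exact hn h3

theorem qA_sub_ne : qA - qA⁻¹ ≠ 0 := by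
  intro h
  apply qA_pow_ne 2 (by norm_num)
  have h0 := qA_ne
  field_simp at h
  linear_combination h

theorem qInt_ne (n : ℕ) : qInt (n + 1) ≠ 0 := by
  rw [qInt]
  refine div_ne_zero ?_ qA_sub_ne
  intro h
  apply qA_pow_ne (2 * (n + 1)) (by omega)
  have h0 := qA_ne
  have h1 : qA ^ (n + 1) - qA⁻¹ ^ (n + 1) = 0 := by exact_mod_cast h
  have h2 : qA ^ (n + 1) * qA⁻¹ ^ (n + 1) = 1 := by
    rw [← mul_pow, mul_inv_cancel₀ h0, one_pow]
  rw [two_mul, pow_add]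
  linear_combination qA ^ (n + 1) * h1 + h2

theorem qInt_one : qInt 1 = 1 := by
  rw [qInt, zpow_one, zpow_one]
  exact div_self qA_sub_ne

theorem qInt_rec (n : ℤ) : qInt (n + 2) = (qA + qA⁻¹) * qInt (n + 1) - qInt n := by
  have h0 := qA_ne
  have h0' : qA⁻¹ ≠ 0 := inv_ne_zero h0
  have h2 : qA * qA⁻¹ = 1 := mul_inv_cancel₀ h0
  have e : n + 2 = n + 1 + 1 := by ring
  rw [qInt, qInt, qInt, ← mul_div_assoc, ← sub_div, e]
  congr 1
  simp only [zpow_add_one₀ h0, zpow_add_one₀ h0']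
  linear_combination (-qA ^ n + qA⁻¹ ^ n) * h2

theorem JW_main (m : ℕ) : JW m * JW m = JW m ∧
    (∀ i : Fin m, EA i * JW m = 0 ∧ JW m * EA i = 0) ∧
    ∃ Q : TLA (m + 1), Q * EA (Fin.last m) = EA (Fin.last m) * Q ∧
      Q * TLAincl m (JW m) = TLAincl m (JW m) ∧ TLAincl m (JW m) * Q = TLAincl m (JW m) ∧
      EA (Fin.last m) * TLAincl m (JW m) * EA (Fin.last m) =
        (-(qInt (m + 2) / qInt (m + 1))) • (Q * EA (Fin.last m)) := by
  induction m with
  | zero =>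
    refine ⟨by simp [JW], fun i => i.elim0, 1, by simp, by simp, by simp, ?_⟩
    have h2 : qInt 2 = qA + qA⁻¹ := by
      have := qInt_rec 0
      simpa [qInt_one, show qInt 0 = 0 by simp [qInt]] using this
    simp only [JW, map_one, mul_one, one_mul, EA_sq]
    simp [h2, qInt_one]
  | succ m ih =>
    obtain ⟨hid, hk, Q, hQE, hQP, hPQ, hE⟩ := ih
    have hn1 : qInt ((m : ℤ) + 1) ≠ 0 := qInt_ne m
    have hn2 : qInt ((m : ℤ) + 2) ≠ 0 := by
      have := qInt_ne (m + 1)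
      push_cast at this
      rwa [show (m : ℤ) + 2 = m + 1 + 1 by ring]
    have hidP : TLAincl m (JW m) * TLAincl m (JW m) = TLAincl m (JW m) := by
      rw [← map_mul, hid]
    have hkP : ∀ i : Fin m, EA i.castSucc * TLAincl m (JW m) = 0 ∧
        TLAincl m (JW m) * EA i.castSucc = 0 := by
      intro i
      rw [← incl_EA, ← map_mul, ← map_mul, (hk i).1, (hk i).2, map_zero]
      exact ⟨rfl, rfl⟩
    have hJ : JW (m + 1) = TLAincl m (JW m) + (qInt (m + 1) / qInt (m + 2)) •
          (TLAincl m (JW m) * EA (Fin.last m) * TLAincl m (JW m)) := rfl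
    have hcc : qInt ((m : ℤ) + 1) / qInt (m + 2) * -(qInt (m + 2) / qInt (m + 1)) = -1 := by
      field_simp
    have hcomm := incl_incl_comm (JW m)
    generalize hP : TLAincl m (JW m) = P at *
    generalize he : EA (Fin.last m) = e at *
    generalize hc : qInt ((m : ℤ) + 1) / qInt (m + 2) = c at *
    have hl : e * JW (m + 1) = 0 := by
      rw [hJ, mul_add, mul_smul_comm, ← mul_assoc, ← mul_assoc, hE, smul_mul_assoc, smul_smul, hcc,
        hQE, mul_assoc, hQP]
      simp
    have hr : JW (m + 1) * e = 0 := by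
      rw [hJ, add_mul, smul_mul_assoc, mul_assoc, mul_assoc, ← mul_assoc e, hE, mul_smul_comm,
        smul_smul, hcc, ← mul_assoc P Q, hPQ]
      simp
    have hPJ : P * JW (m + 1) = JW (m + 1) := by
      rw [hJ, mul_add, mul_smul_comm, ← mul_assoc, ← mul_assoc, hidP]
    have hJP : JW (m + 1) * P = JW (m + 1) := by
      rw [hJ, add_mul, smul_mul_assoc, mul_assoc _ P P, hidP]
    refine ⟨?_, ?_, TLAincl (m + 1) P, hcomm, ?_, ?_, ?_⟩
    · conv_lhs => lhs; rw [hJ]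
      rw [add_mul, smul_mul_assoc, mul_assoc _ P, hPJ, mul_assoc, hl]
      simp
    · intro i
      induction i using Fin.lastCases with
      | last => rw [he]; exact ⟨hl, hr⟩
      | cast i =>
        constructor
        · rw [← hPJ, ← mul_assoc, (hkP i).1, zero_mul]
        · rw [← hJP, mul_assoc, (hkP i).2, mul_zero]
    · rw [← map_mul, hPJ]
    · rw [← map_mul, hJP]
    · have hb := EA_braid (Fin.last (m + 1)) (Fin.last m).castSucc (by right; simp)
      have hs := EA_sq (Fin.last (m + 1))
      have hidR : TLAincl (m + 1) P * TLAincl (m + 1) P = TLAincl (m + 1) P := by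
        rw [← map_mul, hidP]
      rw [← incl_EA, he] at hb
      have hrec := qInt_rec ((m : ℤ) + 1)
      rw [hJ]
      simp only [map_add, map_mul, map_smul]
      generalize EA (Fin.last (m + 1)) = f at *
      generalize TLAincl (m + 1) P = R at *
      generalize TLAincl (m + 1) e = g at *
      have h1 : f * (R * g * R) * f = R * f := by
        calc f * (R * g * R) * f = (f * R) * g * (R * f) := by simp only [mul_assoc]
          _ = R * (f * g * f) * R := by
            conv_lhs => rw [hcomm]
            conv_lhs => lhs; lhs; rw [← hcomm]
            simp only [mul_assoc]
          _ = R * f := by rw [hb, mul_assoc, ← hcomm, ← mul_assoc, hidR]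
      rw [mul_add, add_mul, mul_smul_comm, smul_mul_assoc, h1, ← hcomm, mul_assoc, hs,
        mul_smul_comm, ← add_smul]
      congr 1
      rw [← hc]
      push_cast
      rw [hrec, show (m : ℤ) + 1 + 1 = m + 2 by ring]
      field_simp
      ring

/-- The recursively defined elements `P^{(n)} = JW (n-1)`
(`P^{(1)} = 1`, `P^{(n+1)} = P^{(n)} + ([n]/[n+1]) P^{(n)} e_n P^{(n)}`) satisfy
`P^{(n)} ≠ 0`, `P^{(n)}·P^{(n)} = P^{(n)}` and `e_i·P^{(n)} = P^{(n)}·e_i = 0` for all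
`1 ≤ i ≤ n-1`; hence `P^{(n)}` is the Jones–Wenzl projection. -/
theorem JW_is_jones_wenzl (n : ℕ) (hn : 1 ≤ n) :
    JW (n - 1) ≠ 0 ∧ JW (n - 1) * JW (n - 1) = JW (n - 1) ∧
      ∀ i : Fin (n - 1), EA i * JW (n - 1) = 0 ∧ JW (n - 1) * EA i = 0 := by
  
  refine ⟨?_, (JW_main (n - 1)).1, (JW_main (n - 1)).2.1⟩
  intro h
  have h1 := TLaug_JW (n - 1)
  rw [h, map_zero] at h1
  exact zero_ne_one h1
end
end

section
/- The elements Q^{(n)} ∈ TL^B_n defined recursively by Q^{(0)} = 1 and Q^{(n+1)} = Q^{(n)} + ([n]_s/[n+1]_s)·Q^{(n)} e_n Q^{(n)} are idempotent: Q^{(n)}·Q^{(n)} = Q^{(n)} for all n ≥ 0. -/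
noncomputable section
open scoped Classical

/-! ### The field `ℂ(q,s)` and two-variable quantum integers -/

/-- The field `ℂ(q,s)` of rational functions in two variables. -/
abbrev 𝕃 : Type := FractionRing (MvPolynomial (Fin 2) ℂ)

/-- The variable `q`. -/
def qB : 𝕃 := algebraMap (MvPolynomial (Fin 2) ℂ) 𝕃 (MvPolynomial.X 0)

/-- The variable `s`. -/
def sB : 𝕃 := algebraMap (MvPolynomial (Fin 2) ℂ) 𝕃 (MvPolynomial.X 1)

/-- The two-variable quantum integer `[n]_s`: `[0]_s = 1` and
`[n]_s = q^(n-1) s + q^(-(n-1)) s⁻¹` for `n ≥ 1`. -/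
def bqInt (n : ℤ) : 𝕃 := if n = 0 then 1 else qB ^ (n - 1) * sB + qB ^ (1 - n) * sB⁻¹

/-! ### The Temperley–Lieb algebra of type B and its Jones–Wenzl projections -/

/-- Defining relations of the Temperley–Lieb algebra `TL^B_n` of type B.
The generator indexed by `i : Fin n` represents `e_i` (labels `0, …, n-1`):
the type A relations among `e_1, …, e_{n-1}`, together with `e_0² = -[1]_s e_0`,
`e_1 e_0 e_1 = (q s⁻¹ + q⁻¹ s) e_1`, and `e_0 e_i = e_i e_0` for `i ≥ 2`. -/
inductive TLBrel (n : ℕ) : FreeAlgebra 𝕃 (Fin n) → FreeAlgebra 𝕃 (Fin n) → Prop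
  | sqA (i : Fin n) (h : 1 ≤ (i : ℕ)) :
      TLBrel n (FreeAlgebra.ι 𝕃 i * FreeAlgebra.ι 𝕃 i) ((-(qB + qB⁻¹)) • FreeAlgebra.ι 𝕃 i)
  | sq0 (i : Fin n) (h : (i : ℕ) = 0) :
      TLBrel n (FreeAlgebra.ι 𝕃 i * FreeAlgebra.ι 𝕃 i) ((-(bqInt 1)) • FreeAlgebra.ι 𝕃 i)
  | braidA (i j : Fin n) (hi : 1 ≤ (i : ℕ)) (hj : 1 ≤ (j : ℕ))
      (h : (j : ℕ) = i + 1 ∨ (i : ℕ) = j + 1) :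
      TLBrel n (FreeAlgebra.ι 𝕃 i * FreeAlgebra.ι 𝕃 j * FreeAlgebra.ι 𝕃 i) (FreeAlgebra.ι 𝕃 i)
  | braid0 (i j : Fin n) (hi : (i : ℕ) = 1) (hj : (j : ℕ) = 0) :
      TLBrel n (FreeAlgebra.ι 𝕃 i * FreeAlgebra.ι 𝕃 j * FreeAlgebra.ι 𝕃 i)
        ((qB * sB⁻¹ + qB⁻¹ * sB) • FreeAlgebra.ι 𝕃 i)
  | comm (i j : Fin n) (h : (i : ℕ) + 1 < j ∨ (j : ℕ) + 1 < i) :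
      TLBrel n (FreeAlgebra.ι 𝕃 i * FreeAlgebra.ι 𝕃 j) (FreeAlgebra.ι 𝕃 j * FreeAlgebra.ι 𝕃 i)

/-- The Temperley–Lieb algebra `TL^B_n` of type B, with generators `e_0, …, e_{n-1}`. -/
abbrev TLB (n : ℕ) : Type := RingQuot (TLBrel n)

/-- The generator `e_i` of `TL^B_n` (0-based labels). -/
def EB {n : ℕ} (i : Fin n) : TLB n := RingQuot.mkAlgHom 𝕃 (TLBrel n) (FreeAlgebra.ι 𝕃 i)

set_option synthInstance.maxHeartbeats 1000000 in
/-- The natural inclusion `TL^B_n → TL^B_{n+1}`, sending `e_i` to `e_i`. -/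
def TLBincl (n : ℕ) : TLB n →ₐ[𝕃] TLB (n + 1) :=
  RingQuot.liftAlgHom 𝕃
    ⟨FreeAlgebra.lift 𝕃 (fun i => EB i.castSucc), by
      intro x y h
      induction h with
      | sqA i h =>
          have h2 := RingQuot.mkAlgHom_rel 𝕃 (TLBrel.sqA i.castSucc (by simpa using h))
          simp only [map_mul, map_smul, FreeAlgebra.lift_ι_apply, EB] at h2 ⊢
          exact h2
      | sq0 i h =>
          have h2 := RingQuot.mkAlgHom_rel 𝕃 (TLBrel.sq0 i.castSucc (by simpa using h))
          simp only [map_mul, map_smul, FreeAlgebra.lift_ι_apply, EB] at h2 ⊢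
          exact h2
      | braidA i j hi hj h =>
          have h2 := RingQuot.mkAlgHom_rel 𝕃
            (TLBrel.braidA i.castSucc j.castSucc (by simpa using hi) (by simpa using hj)
              (by simpa using h))
          simp only [map_mul, FreeAlgebra.lift_ι_apply, EB] at h2 ⊢
          exact h2
      | braid0 i j hi hj =>
          have h2 := RingQuot.mkAlgHom_rel 𝕃
            (TLBrel.braid0 i.castSucc j.castSucc (by simpa using hi) (by simpa using hj))
          simp only [map_mul, map_smul, FreeAlgebra.lift_ι_apply, EB] at h2 ⊢
          exact h2
      | comm i j h =>
          have h2 := RingQuot.mkAlgHom_rel 𝕃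
            (TLBrel.comm i.castSucc j.castSucc (by simpa using h))
          simp only [map_mul, FreeAlgebra.lift_ι_apply, EB] at h2 ⊢
          exact h2⟩

/-- The iterated natural inclusion `TL^B_n → TL^B_{n+k}`. -/
def TLBinclIter (n : ℕ) : (k : ℕ) → TLB n →ₐ[𝕃] TLB (n + k)
  | 0 => AlgHom.id 𝕃 (TLB n)
  | k + 1 => (TLBincl (n + k)).comp (TLBinclIter n k)

/-- The type B Jones–Wenzl projection `Q^{(n)} ∈ TL^B_n`, via the recurrence
`Q^{(0)} = 1`, `Q^{(n+1)} = Q^{(n)} + ([n]_s/[n+1]_s) Q^{(n)} e_n Q^{(n)}`. -/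
def JWB : (n : ℕ) → TLB n
  | 0 => 1
  | n + 1 =>
      TLBincl n (JWB n) +
        (bqInt n / bqInt (n + 1)) •
          (TLBincl n (JWB n) * EB (Fin.last n) * TLBincl n (JWB n))

theorem jw_abstract {K A : Type*} [Field K] [Ring A] [Algebra K A] (P Q e f : A) (a b c c' : K)
    (hc : P * e = e * P) (hP : P * P = P) (hQ : Q = P + c' • (P * f * P)) (hQQ : Q * Q = Q)
    (hee : e * e = a • e) (hef : e * f * e = b • e) (h : c * (a + c' * b) = -1) :
    (Q + c • (Q * e * Q)) * (Q + c • (Q * e * Q)) = Q + c • (Q * e * Q) := by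
  have hQP : Q * P = Q := by
    rw [hQ, add_mul, hP, smul_mul_assoc, mul_assoc (P * f), hP]
  have h1 : e * (P * f * P) * e = b • (P * e) := by
    calc e * (P * f * P) * e = (e * P) * f * (P * e) := by noncomm_ring
      _ = P * (e * f * e) * P := by
        rw [← hc]; nth_rewrite 2 [hc]; simp only [mul_assoc]
      _ = b • (P * e) := by
        rw [hef, mul_smul_comm, smul_mul_assoc, mul_assoc, ← hc, ← mul_assoc, hP]
  have h2 : e * Q * e = (a + c' * b) • (P * e) := by
    rw [hQ, mul_add, add_mul, mul_smul_comm, smul_mul_assoc, h1, ← hc, mul_assoc, hee,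
      mul_smul_comm, smul_smul, ← add_smul]
  have h3 : (Q * e * Q) * (Q * e * Q) = (a + c' * b) • (Q * e * Q) := by
    calc (Q * e * Q) * (Q * e * Q) = Q * (e * (Q * Q) * e) * Q := by noncomm_ring
      _ = (a + c' * b) • (Q * e * Q) := by
        rw [hQQ, h2, mul_smul_comm, smul_mul_assoc, ← mul_assoc, hQP]
  have h4 : Q * (Q * e * Q) = Q * e * Q := by rw [← mul_assoc, ← mul_assoc, hQQ]
  have h5 : (Q * e * Q) * Q = Q * e * Q := by rw [mul_assoc, hQQ]
  rw [mul_add, add_mul, add_mul, hQQ, smul_mul_assoc, mul_smul_comm, h4, h5, smul_mul_assoc,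
    mul_smul_comm, h3, smul_smul, smul_smul, mul_assoc c, h, mul_neg_one, neg_smul]
  abel

theorem qB_ne : qB ≠ 0 := by
  unfold qB
  rw [Ne, IsFractionRing.to_map_eq_zero_iff]
  exact MvPolynomial.X_ne_zero 0

theorem sB_ne : sB ≠ 0 := by
  unfold sB
  rw [Ne, IsFractionRing.to_map_eq_zero_iff]
  exact MvPolynomial.X_ne_zero 1

theorem bqInt_succ (n : ℕ) : bqInt ((n : ℤ) + 1) = qB ^ n * sB + (qB ^ n)⁻¹ * sB⁻¹ := by
  unfold bqInt
  rw [if_neg (by omega), add_sub_cancel_right, zpow_natCast,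
    show (1 - ((n : ℤ) + 1)) = -(n : ℤ) by ring, zpow_neg, zpow_natCast]

theorem bqInt_succ_ne (n : ℕ) : bqInt ((n : ℤ) + 1) ≠ 0 := by
  rw [bqInt_succ]
  intro h
  have hq := pow_ne_zero n qB_ne
  have hs := sB_ne
  have h2 : (qB ^ n * sB) ^ 2 + 1 = 0 := by
    field_simp at h
    linear_combination h
  have h3 : algebraMap (MvPolynomial (Fin 2) ℂ) 𝕃
      ((MvPolynomial.X 0 ^ n * MvPolynomial.X 1) ^ 2 + 1) = 0 := by
    rw [map_add, map_pow, map_mul, map_pow, map_one]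
    exact h2
  rw [IsFractionRing.to_map_eq_zero_iff] at h3
  have h4 := congrArg (MvPolynomial.eval (fun _ => (0 : ℂ))) h3
  simp at h4

theorem TLBincl_EB (n : ℕ) (i : Fin n) : TLBincl n (EB i) = EB i.castSucc := by
  unfold TLBincl
  conv_lhs => rw [EB]
  rw [RingQuot.liftAlgHom_mkAlgHom_apply, FreeAlgebra.lift_ι_apply]

theorem EB_comm {n : ℕ} (i j : Fin n) (h : (i : ℕ) + 1 < j ∨ (j : ℕ) + 1 < i) :
    EB i * EB j = EB j * EB i := by
  have h2 := RingQuot.mkAlgHom_rel 𝕃 (TLBrel.comm i j h)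
  rw [map_mul, map_mul] at h2
  exact h2

theorem EB_sqA {n : ℕ} (i : Fin n) (h : 1 ≤ (i : ℕ)) :
    EB i * EB i = (-(qB + qB⁻¹)) • EB i := by
  have h2 := RingQuot.mkAlgHom_rel 𝕃 (TLBrel.sqA i h)
  rw [map_mul, map_smul] at h2
  exact h2

theorem EB_sq0 {n : ℕ} (i : Fin n) (h : (i : ℕ) = 0) :
    EB i * EB i = (-(bqInt 1)) • EB i := by
  have h2 := RingQuot.mkAlgHom_rel 𝕃 (TLBrel.sq0 i h)
  rw [map_mul, map_smul] at h2
  exact h2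

theorem EB_braidA {n : ℕ} (i j : Fin n) (hi : 1 ≤ (i : ℕ)) (hj : 1 ≤ (j : ℕ))
    (h : (j : ℕ) = i + 1 ∨ (i : ℕ) = j + 1) :
    EB i * EB j * EB i = EB i := by
  have h2 := RingQuot.mkAlgHom_rel 𝕃 (TLBrel.braidA i j hi hj h)
  rw [map_mul, map_mul] at h2
  exact h2

theorem EB_braid0 {n : ℕ} (i j : Fin n) (hi : (i : ℕ) = 1) (hj : (j : ℕ) = 0) :
    EB i * EB j * EB i = (qB * sB⁻¹ + qB⁻¹ * sB) • EB i := by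
  have h2 := RingQuot.mkAlgHom_rel 𝕃 (TLBrel.braid0 i j hi hj)
  rw [map_mul, map_mul, map_smul] at h2
  exact h2

theorem incl_comm (n : ℕ) (x : TLB n) :
    TLBincl (n + 1) (TLBincl n x) * EB (Fin.last (n + 1)) =
      EB (Fin.last (n + 1)) * TLBincl (n + 1) (TLBincl n x) := by
  obtain ⟨y, rfl⟩ := RingQuot.mkAlgHom_surjective 𝕃 (TLBrel n) x
  induction y using FreeAlgebra.induction with
  | grade0 r =>
    rw [AlgHom.commutes, AlgHom.commutes, AlgHom.commutes]
    exact Algebra.commutes _ _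
  | grade1 i =>
    change TLBincl (n + 1) (TLBincl n (EB i)) * _ = _ * TLBincl (n + 1) (TLBincl n (EB i))
    rw [TLBincl_EB, TLBincl_EB]
    apply EB_comm
    left
    simp
  | mul a b ha hb =>
    rw [map_mul, map_mul, map_mul, mul_assoc, hb, ← mul_assoc, ha, mul_assoc]
  | add a b ha hb =>
    rw [map_add, map_add, map_add, add_mul, mul_add, ha, hb]

theorem JWB_succ (n : ℕ) : JWB (n + 1) = TLBincl n (JWB n) +
        (bqInt n / bqInt (n + 1)) •
          (TLBincl n (JWB n) * EB (Fin.last n) * TLBincl n (JWB n)) := rfl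

theorem JWB_step (n : ℕ) (h0 : JWB n * JWB n = JWB n)
    (h1 : JWB (n + 1) * JWB (n + 1) = JWB (n + 1)) :
    JWB (n + 2) * JWB (n + 2) = JWB (n + 2) := by
  obtain ⟨b, hb, hs⟩ : ∃ b : 𝕃, EB (Fin.last (n + 1)) * EB (Fin.last n).castSucc *
      EB (Fin.last (n + 1)) = b • EB (Fin.last (n + 1)) ∧
      (bqInt ((n + 1 : ℕ) : ℤ) / bqInt (((n + 1 : ℕ) : ℤ) + 1)) *
        (-(qB + qB⁻¹) + (bqInt n / bqInt (n + 1)) * b) = -1 := by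
    have hq := qB_ne
    have hs := sB_ne
    have e1 := bqInt_succ_ne n
    have e2 := bqInt_succ_ne (n + 1)
    rcases n with _ | m
    · refine ⟨_, EB_braid0 _ _ (by simp) (by simp), ?_⟩
      have e0 : bqInt ((0 : ℕ) : ℤ) = 1 := by simp [bqInt]
      have key : bqInt (((0 : ℕ) : ℤ) + 1) * (-(qB + qB⁻¹)) + (qB * sB⁻¹ + qB⁻¹ * sB) =
          - bqInt (((0 + 1 : ℕ) : ℤ) + 1) := by
        rw [bqInt_succ, bqInt_succ]
        field_simp
        ring
      rw [e0]
      rw [show ((0 + 1 : ℕ) : ℤ) = ((0 : ℕ) : ℤ) + 1 by simp] at *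
      generalize bqInt (((0 : ℕ) : ℤ) + 1) = u at *
      generalize bqInt (((0 : ℕ) : ℤ) + 1 + 1) = v at *
      field_simp
      field_simp at key
      linear_combination key
    · refine ⟨1, by rw [one_smul]; exact EB_braidA _ _ (by simp) (by simp) (by simp), ?_⟩
      have key : bqInt (((m + 1 : ℕ) : ℤ) + 1) * (-(qB + qB⁻¹)) + bqInt ((m : ℤ) + 1) =
          - bqInt (((m + 1 + 1 : ℕ) : ℤ) + 1) := by
        rw [bqInt_succ, bqInt_succ, bqInt_succ, pow_succ, pow_succ]
        have := pow_ne_zero m hq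
        field_simp
        ring
      rw [show ((m + 1 + 1 : ℕ) : ℤ) = ((m + 1 : ℕ) : ℤ) + 1 by simp] at *
      rw [show bqInt ((m + 1 : ℕ) : ℤ) = bqInt ((m : ℤ) + 1) by simp]
      generalize bqInt (((m + 1 : ℕ) : ℤ) + 1) = u at *
      generalize bqInt (((m + 1 : ℕ) : ℤ) + 1 + 1) = v at *
      generalize bqInt ((m : ℤ) + 1) = w at *
      field_simp
      field_simp at key
      linear_combination key
  rw [JWB_succ (n + 1)]
  refine jw_abstract (TLBincl (n + 1) (TLBincl n (JWB n))) _ _ (EB (Fin.last n).castSucc)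
    (-(qB + qB⁻¹)) b _ (bqInt n / bqInt (n + 1)) (incl_comm n _) ?_ ?_ ?_ ?_ hb hs
  · rw [← map_mul, ← map_mul, h0]
  · rw [JWB_succ n, map_add, map_smul, map_mul, map_mul, TLBincl_EB]
  · rw [← map_mul, h1]
  · exact EB_sqA _ (by simp)

theorem JWB_one : JWB 1 * JWB 1 = JWB 1 := by
  have e1 := bqInt_succ_ne 0
  have h := EB_sq0 (Fin.last 0) rfl
  have e0 : bqInt ((0 : ℕ) : ℤ) = 1 := by simp [bqInt]
  have hJ : JWB 1 = 1 + (bqInt 1)⁻¹ • EB (Fin.last 0) := by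
    rw [JWB_succ 0, e0, show JWB 0 = 1 from rfl, map_one, one_mul, mul_one, one_div]
    simp
  have e1' : bqInt 1 ≠ 0 := by simpa using e1
  rw [hJ, mul_add, add_mul, add_mul, one_mul, one_mul, mul_one, smul_mul_assoc, mul_smul_comm, h,
    smul_smul, smul_smul, mul_assoc, mul_neg, inv_mul_cancel₀ e1', mul_neg_one,
    ← add_smul, add_neg_cancel, zero_smul, add_zero]

theorem JWB_both (n : ℕ) : JWB n * JWB n = JWB n ∧ JWB (n + 1) * JWB (n + 1) = JWB (n + 1) := by
  induction n with
  | zero => exact ⟨one_mul _, JWB_one⟩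
  | succ k ih => exact ⟨ih.2, JWB_step k ih.1 ih.2⟩

/-- The recursively defined elements `Q^{(n)} ∈ TL^B_n`
(`Q^{(0)} = 1`, `Q^{(n+1)} = Q^{(n)} + ([n]_s/[n+1]_s) Q^{(n)} e_n Q^{(n)}`)
are idempotent. -/
theorem JWB_idempotent (n : ℕ) : JWB n * JWB n = JWB n := (JWB_both n).1
end
end
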